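/- Let B be the backward shift on ℓ^p (1 ≤ p < ∞) and let (λ_n) be a sequence of positive reals tending to infinity such that λ_{j'k}/λ_{jk} → 0 as k → ∞ for all integers j > j' ≥ 1. Then the sequence of operators (λ_n B^n) has property P_{AP}: for each nonempty open set U there exists x ∈ ℓ^p such that {n ∈ ℕ : λ_n B^n x ∈ U} contains arbitrarily long arithmetic progressions. -/

import Mathlib

open Filter Topology ENNReal

def ContainsAPs (A : Set ℕ) : Prop :=
  ∀ m : ℕ, ∃ a k : ℕ, 1 ≤ a ∧ 1 ≤ k ∧ ∀ j ≤ m, a + j * k ∈ A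

/-! Fix a nonempty open set `U`. By Baire category it suffices that, for each `m`, the points `x`
for which some `k ≥ 1` puts `λ_k B^k x, λ_{2k} B^{2k} x, …, λ_{mk} B^{mk} x` all in `U` are dense.
Given a target `v` and some `y ∈ U`, both finitely supported, the perturbation
`v + ∑ i ∈ [1, m], λ_{ik}⁻¹ S^{ik} y` is close to `v` whenever all `λ_{ik}⁻¹` are small. Applying
`λ_{jk} B^{jk}` to it kills `v` and the terms with `i < j` once `k` is large, turns the term `i = j`
into `y`, and turns a term with `i > j` into `(λ_{jk} / λ_{ik}) S^{(i - j)k} y`, which is small by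
the hypothesis on ratios. Finally `λ_{ik}⁻¹ → 0` along `k = 2 ^ n` by the ratio test, since
`λ_{i 2^n} / λ_{i 2^(n+1)} → 0`. -/

theorem ContainsAPs.mono {A B : Set ℕ} (hA : ContainsAPs A) (hAB : A ⊆ B) : ContainsAPs B := by
  intro m
  obtain ⟨a, k, ha, hk, h⟩ := hA m
  exact ⟨a, k, ha, hk, fun j hj => hAB (h j hj)⟩

theorem containsAPs_of_forall_multiples_mem {A : Set ℕ}
    (hA : ∀ m : ℕ, ∃ k ≥ 1, ∀ j ∈ Finset.Icc 1 m, j * k ∈ A) : ContainsAPs A := by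
  intro m
  obtain ⟨k, hk, h⟩ := hA (m + 1)
  refine ⟨k, k, hk, hk, fun j hj => ?_⟩
  rw [show k + j * k = (j + 1) * k by ring]
  exact h (j + 1) (Finset.mem_Icc.2 ⟨by omega, by omega⟩)

theorem eventually_residual_containsAPs {X Y : Type*} [TopologicalSpace X] [TopologicalSpace Y]
    {T : ℕ → X → Y} (hT : ∀ n, Continuous (T n)) {U : Set Y} (hU : IsOpen U)
    (hdense : ∀ m : ℕ, Dense {x | ∃ k ≥ 1, ∀ j ∈ Finset.Icc 1 m, T (j * k) x ∈ U}) :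
    ∀ᶠ x in residual X, ContainsAPs {n | T n x ∈ U} := by
  have hopen (m : ℕ) : IsOpen {x | ∃ k ≥ 1, ∀ j ∈ Finset.Icc 1 m, T (j * k) x ∈ U} := by
    simp only [Set.ofPred_exists, Set.ofPred_and, Set.ofPred_forall]
    exact isOpen_iUnion fun k => isOpen_const.inter <|
      isOpen_biInter_finset fun j _ => hU.preimage (hT (j * k))
  filter_upwards [eventually_countable_forall.2 fun m =>
    residual_of_dense_open (hopen m) (hdense m)] with x hx
  exact containsAPs_of_forall_multiples_mem hx

theorem dense_setOf_exists_forall_multiples_mem {R X Y : Type*} [Semiring R]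
    [AddCommMonoid X] [TopologicalSpace X] [ContinuousAdd X] [Module R X]
    [AddCommMonoid Y] [TopologicalSpace Y] [ContinuousAdd Y] [Module R Y]
    {T : ℕ → X →L[R] Y} {S : ℕ → Y → X} {D : Set X} {E : Set Y} (hD : Dense D) (hE : Dense E)
    {f : Filter ℕ} [f.NeBot] (hf : ∀ᶠ k in f, 1 ≤ k)
    (hT : ∀ x ∈ D, ∀ j ≥ 1, Tendsto (fun k => T (j * k) x) f (𝓝 0))
    (hS : ∀ y ∈ E, ∀ i ≥ 1, Tendsto (fun k => S (i * k) y) f (𝓝 0))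
    (hTS : ∀ y ∈ E, ∀ i ≥ 1, ∀ j ≥ 1,
      Tendsto (fun k => T (j * k) (S (i * k) y)) f (𝓝 (if i = j then y else 0)))
    {U : Set Y} (hU : IsOpen U) (hUne : U.Nonempty) (m : ℕ) :
    Dense {x | ∃ k ≥ 1, ∀ j ∈ Finset.Icc 1 m, T (j * k) x ∈ U} := by
  refine dense_iff_inter_open.2 fun V hV hVne => ?_
  obtain ⟨v, hvV, hvD⟩ := hD.inter_open_nonempty V hV hVne
  obtain ⟨y, hyU, hyE⟩ := hE.inter_open_nonempty U hU hUne
  let J := Finset.Icc 1 m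
  have one_le {j : ℕ} (hj : j ∈ J) : 1 ≤ j := (Finset.mem_Icc.1 hj).1
  let x (k : ℕ) : X := v + ∑ i ∈ J, S (i * k) y
  have hx : Tendsto x f (𝓝 v) := by
    simpa using tendsto_const_nhds.add
      (tendsto_finsetSum J fun i hi => hS y hyE i (one_le hi))
  have hTx : ∀ j ∈ J, Tendsto (fun k => T (j * k) (x k)) f (𝓝 y) := by
    intro j hj
    have hsum := tendsto_finsetSum J fun i hi => hTS y hyE i (one_le hi) j (one_le hj)
    simpa [x, hj] using (hT v hvD j (one_le hj)).add hsum
  have hTxU : ∀ᶠ k in f, ∀ j ∈ J, T (j * k) (x k) ∈ U :=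
    (Finset.eventually_all J).2 fun j hj => (hTx j hj).eventually (hU.mem_nhds hyU)
  obtain ⟨k, hkV, hk, hkU⟩ := ((hx.eventually (hV.mem_nhds hvV)).and (hf.and hTxU)).exists
  exact ⟨x k, hkV, k, hk, hkU⟩

theorem tendsto_inv_mul_two_pow_of_tendsto_div {𝕜 : Type*} [NormedField 𝕜] {l : ℕ → 𝕜}
    (hl : ∀ n, l n ≠ 0) {i : ℕ}
    (hratio : Tendsto (fun k => l (i * k) / l (2 * i * k)) atTop (𝓝 0)) :
    Tendsto (fun n => (l (i * 2 ^ n))⁻¹) atTop (𝓝 0) := by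
  have htwo : Tendsto (fun n : ℕ => 2 ^ n) atTop atTop :=
    tendsto_pow_atTop_atTop_of_one_lt one_lt_two
  have hsummable : Summable fun n => ‖(l (i * 2 ^ n))⁻¹‖ := by
    refine summable_of_ratio_test_tendsto_lt_one zero_lt_one
      (.of_forall fun n => norm_ne_zero_iff.2 (inv_ne_zero (hl _))) ?_
    refine (tendsto_zero_iff_norm_tendsto_zero.1 (hratio.comp htwo)).congr fun n => ?_
    have hdouble : 2 * i * 2 ^ n = i * 2 ^ (n + 1) := by ring
    rw [Function.comp_apply, hdouble, norm_div, norm_norm, norm_norm, norm_inv, norm_inv,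
      inv_div_inv]
  exact tendsto_zero_iff_norm_tendsto_zero.2 hsummable.tendsto_atTop_zero

theorem eventually_pow_mul_apply_eq_zero {R X : Type*} [Semiring R] [AddCommMonoid X]
    [TopologicalSpace X] [Module R X] {B : X →L[R] X} {x : X} (hx : ∃ n, (B ^ n) x = 0)
    {j : ℕ} (hj : 1 ≤ j) :
    ∀ᶠ k in atTop, (B ^ (j * k)) x = 0 := by
  obtain ⟨n, hn⟩ := hx
  filter_upwards [eventually_ge_atTop n] with k hk
  have hle : n ≤ j * k := hk.trans (Nat.le_mul_of_pos_left k hj)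
  rw [← pow_sub_mul_pow B hle, mul_apply_eq_comp, hn, map_zero]

section LeftInvertible

variable {M : Type*} [Monoid M] {a b : M} {m n : ℕ}

theorem pow_mul_pow_of_mul_eq_one_of_le (hab : a * b = 1) (hmn : m ≤ n) :
    a ^ n * b ^ m = a ^ (n - m) := by
  rw [← pow_sub_mul_pow a hmn, mul_assoc, pow_mul_pow_eq_one m hab, mul_one]

theorem pow_mul_pow_of_mul_eq_one_of_ge (hab : a * b = 1) (hnm : n ≤ m) :
    a ^ n * b ^ m = b ^ (m - n) := by
  rw [← pow_mul_pow_sub b hnm, ← mul_assoc, pow_mul_pow_eq_one n hab, one_mul]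

variable {𝕜 X : Type*} [NontriviallyNormedField 𝕜] [SeminormedAddCommGroup X] [NormedSpace 𝕜 X]
  {B S : X →L[𝕜] X} {l : ℕ → 𝕜}

theorem tendsto_smul_pow_apply_zero (hS : ∃ C, ∀ n, ‖S ^ n‖ ≤ C) {ι : Type*} {f : Filter ι}
    {c : ι → 𝕜} (hc : Tendsto c f (𝓝 0)) (e : ι → ℕ) (x : X) :
    Tendsto (fun k => c k • (S ^ e k) x) f (𝓝 0) := by
  obtain ⟨C, hC⟩ := hS
  exact hc.zero_smul_isBoundedUnder_le <|
    isBoundedUnder_of ⟨C * ‖x‖, fun k => (S ^ e k).le_of_opNorm_le (hC (e k)) x⟩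

theorem tendsto_smul_pow_apply_inv_smul_pow_apply (hBS : B * S = 1) (hS : ∃ C, ∀ n, ‖S ^ n‖ ≤ C)
    (hl : ∀ n, l n ≠ 0) {i j : ℕ}
    (hratio : j < i → Tendsto (fun k => l (j * k) / l (i * k)) atTop (𝓝 0))
    {y : X} (hy : ∃ n, (B ^ n) y = 0) :
    Tendsto (fun k => l (j * k) • (B ^ (j * k)) ((l (i * k))⁻¹ • (S ^ (i * k)) y)) atTop
      (𝓝 (if i = j then y else 0)) := by
  have hterm (k : ℕ) : l (j * k) • (B ^ (j * k)) ((l (i * k))⁻¹ • (S ^ (i * k)) y) =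
      (l (j * k) / l (i * k)) • (B ^ (j * k) * S ^ (i * k)) y := by
    rw [map_smul, smul_smul, div_eq_mul_inv, mul_apply_eq_comp]
  simp only [hterm]
  rcases lt_trichotomy i j with hij | rfl | hji
  · rw [if_neg hij.ne]
    refine tendsto_const_nhds.congr' ?_
    filter_upwards [eventually_pow_mul_apply_eq_zero hy (Nat.sub_pos_of_lt hij)] with k hk
    rw [pow_mul_pow_of_mul_eq_one_of_le hBS (Nat.mul_le_mul_right k hij.le), ← Nat.sub_mul, hk,
      smul_zero]
  · simpa [pow_mul_pow_eq_one _ hBS, hl] using tendsto_const_nhds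
  · rw [if_neg hji.ne']
    refine (tendsto_smul_pow_apply_zero hS (hratio hji) (fun k => i * k - j * k) y).congr
      fun k => ?_
    rw [pow_mul_pow_of_mul_eq_one_of_ge hBS (Nat.mul_le_mul_right k hji.le)]

theorem eventually_residual_containsAPs_smul_pow (hBS : B * S = 1) (hS : ∃ C, ∀ n, ‖S ^ n‖ ≤ C)
    (hB : Dense {x | ∃ n, (B ^ n) x = 0}) (hl : ∀ n, l n ≠ 0)
    (hratio : ∀ j j' : ℕ, 1 ≤ j' → j' < j →
      Tendsto (fun k => l (j' * k) / l (j * k)) atTop (𝓝 0))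
    {U : Set X} (hU : IsOpen U) (hUne : U.Nonempty) :
    ∀ᶠ x in residual X, ContainsAPs {n | l n • (B ^ n) x ∈ U} := by
  let f : Filter ℕ := map (fun n => 2 ^ n) atTop
  have hf : f ≤ atTop := tendsto_pow_atTop_atTop_of_one_lt one_lt_two
  have hinv : ∀ i ≥ 1, Tendsto (fun k => (l (i * k))⁻¹) f (𝓝 0) := fun i hi =>
    tendsto_map'_iff.2 <|
      tendsto_inv_mul_two_pow_of_tendsto_div hl (hratio (2 * i) i hi (by omega))
  let T (n : ℕ) : X →L[𝕜] X := l n • B ^ n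
  refine eventually_residual_containsAPs (T := fun n => T n) (fun n => (T n).continuous) hU
    fun m => ?_
  refine dense_setOf_exists_forall_multiples_mem (T := T) (S := fun n y => (l n)⁻¹ • (S ^ n) y)
    hB hB (hf (eventually_ge_atTop 1)) ?_ ?_ ?_ hU hUne m
  · intro x hx j hj
    refine (tendsto_const_nhds.congr' ?_).mono_left hf
    filter_upwards [eventually_pow_mul_apply_eq_zero hx hj] with k hk
    simp [T, hk]
  · exact fun y _ i hi => tendsto_smul_pow_apply_zero hS (hinv i hi) (fun k => i * k) y
  · exact fun y hy i _ j hj =>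
      (tendsto_smul_pow_apply_inv_smul_pow_apply hBS hS hl (hratio i j hj) hy).mono_left hf

end LeftInvertible

section Reindexing

open scoped lp

variable {α β F : Type*} [NormedAddCommGroup F] {p : ℝ≥0∞} {g : α → β}

theorem apply_extend_zero {M N : Type*} [Zero M] [Zero N] {φ : M → N} (hφ : φ 0 = 0) (x : α → M)
    (b : β) : φ (Function.extend g x 0 b) = Function.extend g (fun a => φ (x a)) 0 b := by
  rw [Function.apply_extend φ]
  congr
  exact funext fun _ => hφ

theorem norm_extend_zero_apply_le {x : α → F} {C : ℝ} (hC : 0 ≤ C) (hx : ∀ a, ‖x a‖ ≤ C) (b : β) :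
    ‖Function.extend g x 0 b‖ ≤ C := by
  classical
  rw [Function.extend_def]
  split_ifs
  · exact hx _
  · simpa using hC

theorem memℓp_comp_of_injective (hg : g.Injective) {x : β → F} (hx : Memℓp x p) :
    Memℓp (x ∘ g) p := by
  rcases p.trichotomy with rfl | rfl | hp
  · exact memℓp_zero (hx.finite_dsupport.preimage hg.injOn)
  · exact memℓp_infty (hx.bddAbove.mono (Set.range_comp_subset_range g fun b => ‖x b‖))
  · exact memℓp_gen ((hx.summable hp).comp_injective hg)

theorem memℓp_extend_zero_of_injective (hg : g.Injective) {x : α → F} (hx : Memℓp x p) :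
    Memℓp (Function.extend g x 0) p := by
  rcases p.trichotomy with rfl | rfl | hp
  · refine memℓp_zero ((hx.finite_dsupport.image g).subset fun b hb => ?_)
    obtain ⟨a, rfl⟩ : ∃ a, g a = b := not_imp_comm.1 (Function.extend_apply' x (0 : β → F) b) hb
    exact ⟨a, by simpa [hg.extend_apply] using hb, rfl⟩
  · obtain ⟨C, hC⟩ := hx.bddAbove
    refine memℓp_infty ⟨max C 0, Set.forall_mem_range.2 fun b => ?_⟩
    exact norm_extend_zero_apply_le (le_max_right C 0)
      (fun a => le_max_of_le_left (hC (Set.mem_range_self a))) b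
  · refine memℓp_gen ?_
    simp only [apply_extend_zero (φ := fun a : F => ‖a‖ ^ p.toReal) (by simp [hp.ne'])]
    exact (summable_extend_zero hg).2 (hx.summable hp)

variable [Fact (1 ≤ p)]

theorem norm_comp_le_of_injective (hg : g.Injective) (x : ℓ^p(β, F)) :
    ‖(⟨x ∘ g, memℓp_comp_of_injective hg (lp.memℓp x)⟩ : ℓ^p(α, F))‖ ≤ ‖x‖ := by
  rcases p.dichotomy with rfl | hp
  · exact lp.norm_le_of_forall_le (norm_nonneg x) fun a => lp.norm_apply_le_norm top_ne_zero x (g a)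
  · have hp' : 0 < p.toReal := zero_lt_one.trans_le hp
    refine lp.norm_le_of_tsum_le hp' (norm_nonneg x) ?_
    rw [lp.norm_rpow_eq_tsum hp']
    exact tsum_comp_le_tsum_of_inj ((lp.memℓp x).summable hp') (fun b => by positivity) hg

theorem norm_extend_zero_le_of_injective (hg : g.Injective) (x : ℓ^p(α, F)) :
    ‖(⟨Function.extend g x 0, memℓp_extend_zero_of_injective hg (lp.memℓp x)⟩ : ℓ^p(β, F))‖ ≤
      ‖x‖ := by
  rcases p.dichotomy with rfl | hp
  · exact lp.norm_le_of_forall_le (norm_nonneg x) <| norm_extend_zero_apply_le (norm_nonneg x)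
      (lp.norm_apply_le_norm top_ne_zero x)
  · have hp' : 0 < p.toReal := zero_lt_one.trans_le hp
    refine lp.norm_le_of_tsum_le hp' (norm_nonneg x) ?_
    simp only [apply_extend_zero (φ := fun a : F => ‖a‖ ^ p.toReal) (by simp [hp'.ne'])]
    exact (tsum_extend_zero hg _).trans_le (lp.norm_rpow_eq_tsum hp' x).ge

end Reindexing

section Shifts

open scoped lp

variable {p : ℝ≥0∞} [Fact (1 ≤ p)] {𝕜 F : Type*} [NontriviallyNormedField 𝕜]
  [NormedAddCommGroup F] [NormedSpace 𝕜 F]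

variable (p 𝕜 F) in
/-- The backward shift `B (x₀, x₁, x₂, …) = (x₁, x₂, x₃, …)` on `ℓ^p(ℕ, F)`. -/
noncomputable def backwardShift : ℓ^p(ℕ, F) →L[𝕜] ℓ^p(ℕ, F) :=
  LinearMap.mkContinuous
    { toFun x := ⟨x ∘ Nat.succ, memℓp_comp_of_injective Nat.succ_injective (lp.memℓp x)⟩
      map_add' _ _ := rfl
      map_smul' _ _ := rfl }
    1 fun x => (norm_comp_le_of_injective Nat.succ_injective x).trans_eq (one_mul _).symm

variable (p 𝕜 F) in
/-- The forward shift `S (x₀, x₁, x₂, …) = (0, x₀, x₁, …)` on `ℓ^p(ℕ, F)`, written as extension by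
zero along the successor map. -/
noncomputable def forwardShift : ℓ^p(ℕ, F) →L[𝕜] ℓ^p(ℕ, F) :=
  LinearMap.mkContinuous
    { toFun x := ⟨Function.extend Nat.succ x 0,
        memℓp_extend_zero_of_injective Nat.succ_injective (lp.memℓp x)⟩
      map_add' x y := lp.ext <| map_add (Function.ExtendByZero.hom F Nat.succ) ⇑x ⇑y
      map_smul' c x := lp.ext <| by simpa using Function.extend_smul c Nat.succ ⇑x 0 }
    1 fun x => (norm_extend_zero_le_of_injective Nat.succ_injective x).trans_eq (one_mul _).symm

theorem backwardShift_apply (x : ℓ^p(ℕ, F)) (i : ℕ) : backwardShift p 𝕜 F x i = x (i + 1) :=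
  rfl

theorem backwardShift_pow_apply (n : ℕ) (x : ℓ^p(ℕ, F)) (i : ℕ) :
    (backwardShift p 𝕜 F ^ n) x i = x (i + n) := by
  induction n generalizing x with
  | zero => rfl
  | succ n ih => rw [pow_succ, mul_apply_eq_comp, ih, backwardShift_apply, add_assoc]

theorem backwardShift_mul_forwardShift : backwardShift p 𝕜 F * forwardShift p 𝕜 F = 1 := by
  ext x i
  exact Nat.succ_injective.extend_apply x 0 i

theorem norm_forwardShift_pow_le_one (n : ℕ) : ‖forwardShift p 𝕜 F ^ n‖ ≤ 1 := by
  have hS : ‖forwardShift p 𝕜 F‖ ≤ 1 := LinearMap.mkContinuous_norm_le _ zero_le_one _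
  induction n with
  | zero => exact ContinuousLinearMap.norm_id_le
  | succ n ih => exact (norm_mul_le _ _).trans (mul_le_one₀ ih (norm_nonneg _) hS)

theorem dense_setOf_exists_backwardShift_pow_apply_eq_zero (hp : p ≠ ⊤) :
    Dense {x | ∃ n, (backwardShift p 𝕜 F ^ n) x = 0} := by
  intro x
  refine mem_closure_of_tendsto (lp.hasSum_single hp x).tendsto_sum_nat
    (.of_forall fun n => ⟨n, lp.ext <| funext fun i => ?_⟩)
  rw [backwardShift_pow_apply, lp.coeFn_sum, Finset.sum_apply]
  refine Finset.sum_eq_zero fun j hj => lp.single_apply_ne p j _ ?_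
  have := Finset.mem_range.1 hj
  omega

theorem weighted_shift_sequence_has_P_AP_general (hp : p ≠ ⊤) {l : ℕ → 𝕜} (hl : ∀ n, l n ≠ 0)
    (hratio : ∀ j j' : ℕ, 1 ≤ j' → j' < j →
      Tendsto (fun k => l (j' * k) / l (j * k)) atTop (𝓝 0))
    {U : Set ℓ^p(ℕ, F)} (hU : IsOpen U) (hUne : U.Nonempty) :
    ∀ᶠ x in residual ℓ^p(ℕ, F), ContainsAPs {n | l n • (backwardShift p 𝕜 F ^ n) x ∈ U} :=
  eventually_residual_containsAPs_smul_pow backwardShift_mul_forwardShift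
    ⟨1, norm_forwardShift_pow_le_one⟩ (dense_setOf_exists_backwardShift_pow_apply_eq_zero hp)
    hl hratio hU hUne

end Shifts

theorem weighted_shift_sequence_has_P_AP
    (p : ℝ≥0∞) [Fact (1 ≤ p)] (hp' : p ≠ ⊤)
    (l : ℕ → ℝ) (hpos : ∀ n, 0 < l n) (htop : Tendsto l atTop atTop)
    (hratio : ∀ j j' : ℕ, 1 ≤ j' → j' < j →
        Tendsto (fun k : ℕ => l (j' * k) / l (j * k)) atTop (𝓝 0)) :
    ∀ U : Set (lp (fun _ : ℕ => ℝ) p), IsOpen U → U.Nonempty →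
      ∃ x : lp (fun _ : ℕ => ℝ) p,
        ContainsAPs {n : ℕ | ∃ y ∈ U,
          ∀ i : ℕ, (y : ℕ → ℝ) i = l n * (x : ℕ → ℝ) (i + n)} := by
  intro U hU hUne
  obtain ⟨x, hx⟩ := (dense_of_mem_residual <| weighted_shift_sequence_has_P_AP_general (𝕜 := ℝ) hp'
    (fun n => (hpos n).ne') hratio hU hUne).nonempty
  exact ⟨x, hx.mono fun n hn =>
    ⟨_, hn, fun i => congrArg (l n * ·) (backwardShift_pow_apply n x i)⟩⟩
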